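/- arXiv:2003.11002 — 2 statements merged into one kernel-verified Lean document; each statement's English description precedes it below -/
import Mathlib

section
/- Let L̂ : L_p(μ) → ℂ be a continuous m-homogeneous polynomial, m ≥ 2, on a complex L_p(μ) space with 1 ≤ p ≤ m′, where m′ = m/(m−1). Then for every k ≤ m and every x ∈ L_p(μ) with ‖x‖_p < 1, ‖D̂^k L̂(x)‖ ≤ k! · (1−‖x‖_p^p)^{−k/p} · ‖L̂‖. -/
open Metric MeasureTheory

/-!
Clarkson's inequality `‖x + y‖ ^ m + ‖x - y‖ ^ m ≤ 2 (‖x‖ ^ p + ‖y‖ ^ p) ^ (m / p)` holds in `L_p`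
for `1 ≤ p ≤ m / (m - 1)`: for nonnegative reals the two binomial expansions compare term by term
by AM-GM, the parallelogram law and convexity pass to inner product spaces, and Minkowski's
inequality passes to `L_p`. Hence if `‖x‖ ^ p + ‖y‖ ^ p ≤ 1`, then `f z = F (x + z • y)` satisfies
`‖f z‖ + ‖f (-z)‖ ≤ 2 ‖F‖` on the unit circle. Since `f z + (-1) ^ k f (-z)` has twice the `k`-th
derivative of `f` at `0`, Cauchy's estimate bounds that derivative by `k! ‖F‖`. For `‖y‖ ≤ 1`, apply
this to `(1 - ‖x‖ ^ p) ^ (1 / p) • y`.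
-/

theorem convexOn_add_le_add_of_add_eq {𝕜 : Type*} [Field 𝕜] [LinearOrder 𝕜]
    [IsStrictOrderedRing 𝕜] {f : 𝕜 → 𝕜} {s : Set 𝕜} (hf : ConvexOn 𝕜 s f) {a b c d : 𝕜} (ha : a ∈ s)
    (hd : d ∈ s) (hb : b ∈ Set.Icc a d) (h : b + c = a + d) :
    f b + f c ≤ f a + f d := by
  rw [← segment_eq_Icc (hb.1.trans hb.2)] at hb
  obtain ⟨v, w, hv, hw, hvw, rfl⟩ := hb
  have hc : c = w • a + v • d := by
    simp only [smul_eq_mul] at h ⊢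
    linear_combination h - (a + d) * hvw
  have hfb := hf.2 ha hd hv hw hvw
  have hfc := hf.2 ha hd hw hv (by rwa [add_comm])
  rw [← hc] at hfc
  simp only [smul_eq_mul] at hfb hfc ⊢
  linear_combination hfb + hfc + (f a + f d) * hvw

theorem add_mul_pow_mul_pow_le {s t : ℝ} (hs : 0 ≤ s) (ht : 0 ≤ t) (i j : ℕ) :
    (i + j) * (s ^ i * t ^ j) ≤ i * s ^ (i + j) + j * t ^ (i + j) := by
  rcases Nat.eq_zero_or_pos (i + j) with h0 | hpos
  · obtain ⟨rfl, rfl⟩ := Nat.add_eq_zero_iff.1 h0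
    simp
  have hpos' : (0 : ℝ) < i + j := by exact_mod_cast hpos
  have hroot {r : ℝ} (hr : 0 ≤ r) (l : ℕ) : (r ^ (i + j)) ^ (l / (i + j) : ℝ) = r ^ l := by
    rw [← Real.rpow_natCast_mul hr, Nat.cast_add, mul_div_cancel₀ _ hpos'.ne', Real.rpow_natCast]
  have amgm := Real.geom_mean_le_arith_mean2_weighted (w₁ := i / (i + j)) (w₂ := j / (i + j))
    (by positivity) (by positivity) (pow_nonneg hs (i + j)) (pow_nonneg ht (i + j)) (by field_simp)
  rw [hroot hs, hroot ht] at amgm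
  calc (i + j) * (s ^ i * t ^ j)
      ≤ (i + j) * (i / (i + j) * s ^ (i + j) + j / (i + j) * t ^ (i + j)) := by gcongr
    _ = i * s ^ (i + j) + j * t ^ (i + j) := by field_simp

theorem choose_succ_mul_pow_mul_pow_le {s t : ℝ} (hs : 0 ≤ s) (ht : 0 ≤ t) {n i : ℕ}
    (hi : i ≤ n) :
    (s ^ n) ^ (i + 1) * (t ^ n) ^ (n + 1 - (i + 1)) * (n + 1).choose (i + 1) ≤
      (s ^ (n + 1)) ^ i * (t ^ (n + 1)) ^ (n - i) * n.choose i +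
        (s ^ (n + 1)) ^ (i + 1) * (t ^ (n + 1)) ^ (n - (i + 1)) * n.choose (i + 1) := by
  rcases hi.eq_or_lt with rfl | hlt
  · simp [← pow_mul, mul_comm]
  obtain ⟨j, rfl⟩ : ∃ j, n = i + 1 + j := Nat.exists_eq_add_of_le hlt
  have hleft : ((i + 1 + j : ℕ) + 1 : ℝ) * (i + 1 + j).choose i =
      (i + 1 + j + 1).choose (i + 1) * (i + 1 : ℕ) := by
    exact_mod_cast Nat.add_one_mul_choose_eq (i + 1 + j) i
  have hright : ((i + 1 + j).choose (i + 1) : ℝ) * ((i + 1 + j : ℕ) + 1) =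
      (i + 1 + j + 1).choose (i + 1) * (j + 1 : ℕ) := by
    have h := Nat.choose_mul_succ_eq (i + 1 + j) (i + 1)
    rw [show i + 1 + j + 1 - (i + 1) = j + 1 by omega] at h
    exact_mod_cast h
  have amgm := add_mul_pow_mul_pow_le ht hs (i + 1) (j + 1)
  rw [show i + 1 + j + 1 - (i + 1) = j + 1 by omega, show i + 1 + j - i = j + 1 by omega,
    show i + 1 + j - (i + 1) = j by omega]
  refine le_of_mul_le_mul_left ?_ (by positivity : (0 : ℝ) < (i + 1 + j : ℕ) + 1)
  have hscaled := mul_le_mul_of_nonneg_left amgm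
    (by positivity : 0 ≤ (i + 1 + j + 1).choose (i + 1) *
      (s ^ ((i + 2 + j) * i) * t ^ ((i + 2 + j) * j)))
  push_cast at hleft hright hscaled ⊢
  linear_combination hscaled - s ^ ((i + 2 + j) * i) * t ^ ((i + 2 + j) * j) *
    (t ^ (i + 2 + j) * hleft + s ^ (i + 2 + j) * hright)

theorem add_pow_add_sub_pow_le {s t : ℝ} (hs : 0 ≤ s) (ht : 0 ≤ t) (n : ℕ) :
    (t ^ n + s ^ n) ^ (n + 1) + (t ^ n - s ^ n) ^ (n + 1) ≤
      2 * (t ^ (n + 1) + s ^ (n + 1)) ^ n := by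
  let D (i : ℕ) : ℝ := (s ^ n) ^ i * (t ^ n) ^ (n + 1 - i) * (n + 1).choose i
  let E (i : ℕ) : ℝ := (s ^ (n + 1)) ^ i * (t ^ (n + 1)) ^ (n - i) * n.choose i
  let w (i : ℕ) : ℝ := 1 + (-1) ^ i
  have hw (i : ℕ) : w i + w (i + 1) = 2 := by simp only [w]; ring
  have hw_nonneg (i : ℕ) : 0 ≤ w i := by rcases neg_one_pow_eq_or ℝ i with h | h <;> simp [w, h]
  have hD_zero : D 0 = E 0 := by simp [D, E, ← pow_mul, mul_comm]
  have hD_succ {i : ℕ} (hi : i ∈ Finset.range (n + 1)) : D (i + 1) ≤ E i + E (i + 1) :=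
    choose_succ_mul_pow_mul_pow_le hs ht (Finset.mem_range_succ_iff.1 hi)
  have hE_last : E (n + 1) = 0 := by simp [E]
  have hshift : ∑ i ∈ Finset.range (n + 1), w (i + 1) * E (i + 1) + w 0 * E 0 =
      ∑ i ∈ Finset.range (n + 1), w i * E i := by
    rw [← Finset.sum_range_succ' (fun i ↦ w i * E i), Finset.sum_range_succ, hE_last, mul_zero,
      add_zero]
  calc (t ^ n + s ^ n) ^ (n + 1) + (t ^ n - s ^ n) ^ (n + 1)
      = (s ^ n + t ^ n) ^ (n + 1) + (-s ^ n + t ^ n) ^ (n + 1) := by ring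
    _ = ∑ i ∈ Finset.range (n + 2), w i * D i := by
        rw [add_pow, add_pow, ← Finset.sum_add_distrib]
        refine Finset.sum_congr rfl fun i _ ↦ ?_
        rw [neg_pow]
        ring
    _ = ∑ i ∈ Finset.range (n + 1), w (i + 1) * D (i + 1) + w 0 * E 0 := by
        rw [Finset.sum_range_succ', hD_zero]
    _ ≤ ∑ i ∈ Finset.range (n + 1), w (i + 1) * (E i + E (i + 1)) + w 0 * E 0 := by
        gcongr with i hi
        exacts [hw_nonneg _, hD_succ hi]
    _ = ∑ i ∈ Finset.range (n + 1), (w i + w (i + 1)) * E i := by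
        simp only [mul_add, add_mul, Finset.sum_add_distrib, ← hshift]
        ring
    _ = 2 * (t ^ (n + 1) + s ^ (n + 1)) ^ n := by
        simp only [hw, ← Finset.mul_sum]
        rw [add_comm (t ^ (n + 1)), add_pow]

theorem add_pow_add_abs_sub_pow_le {a b : ℝ} (ha : 0 ≤ a) (hb : 0 ≤ b) {m : ℕ} (hm : 2 ≤ m) :
    (a + b) ^ m + |a - b| ^ m ≤
      2 * (a ^ (m / (m - 1) : ℝ) + b ^ (m / (m - 1) : ℝ)) ^ (m - 1) := by
  wlog hab : b ≤ a generalizing a b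
  · rw [add_comm a, abs_sub_comm, add_comm (a ^ _)]
    exact this hb ha (le_of_not_ge hab)
  obtain ⟨n, rfl⟩ : ∃ n, m = n + 1 := Nat.exists_eq_add_of_le' (by omega)
  have hn : n ≠ 0 := by omega
  have hroot {c : ℝ} (hc : 0 ≤ c) : (c ^ (n⁻¹ : ℝ)) ^ n = c := Real.rpow_inv_natCast_pow hc hn
  have hconj {c : ℝ} (hc : 0 ≤ c) :
      (c ^ (n⁻¹ : ℝ)) ^ (n + 1) = c ^ ((n + 1 : ℕ) / ((n + 1 : ℕ) - 1) : ℝ) := by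
    rw [← Real.rpow_mul_natCast hc]
    congr 1
    push_cast
    ring
  have hroots :=
    add_pow_add_sub_pow_le (Real.rpow_nonneg hb (n⁻¹ : ℝ)) (Real.rpow_nonneg ha (n⁻¹ : ℝ)) n
  rwa [hroot ha, hroot hb, hconj ha, hconj hb, ← abs_of_nonneg (sub_nonneg.2 hab)] at hroots

/-- Clarkson's inequality with exponents `r` and `p`, as a property of the norm of `E` that can be
transferred to `L_p` spaces of `E`-valued functions. The exponent `r / p` makes both sides
homogeneous of degree `r`; only positive `r` and `p` are meant. -/
def ClarksonInequality (E : Type*) [NormedAddCommGroup E] (r p : ℝ) : Prop :=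
  ∀ x y : E, ‖x + y‖ ^ r + ‖x - y‖ ^ r ≤ 2 * (‖x‖ ^ p + ‖y‖ ^ p) ^ (r / p)

theorem norm_add_rpow_add_norm_sub_rpow_le (𝕜 : Type*) {E : Type*} [RCLike 𝕜] [NormedAddCommGroup E]
    [InnerProductSpace 𝕜 E] {r : ℝ} (hr : 2 ≤ r) (x y : E) :
    ‖x + y‖ ^ r + ‖x - y‖ ^ r ≤ (‖x‖ + ‖y‖) ^ r + |‖x‖ - ‖y‖| ^ r := by
  have hsq {c : ℝ} (hc : 0 ≤ c) : (c ^ 2) ^ (r / 2) = c ^ r := by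
    rw [← Real.rpow_natCast_mul hc, Nat.cast_ofNat, mul_div_cancel₀ _ two_ne_zero]
  have hle_add : ‖x + y‖ ^ 2 ≤ (‖x‖ + ‖y‖) ^ 2 := by gcongr; exact norm_add_le x y
  have hsub_le : |‖x‖ - ‖y‖| ^ 2 ≤ ‖x + y‖ ^ 2 := by
    gcongr
    simpa using abs_norm_sub_norm_le x (-y)
  have hpar : ‖x + y‖ ^ 2 + ‖x - y‖ ^ 2 = |‖x‖ - ‖y‖| ^ 2 + (‖x‖ + ‖y‖) ^ 2 := by
    rw [parallelogram_law_with_norm 𝕜, sq_abs]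
    ring
  have hmajor := convexOn_add_le_add_of_add_eq (convexOn_rpow (p := r / 2) (by linarith))
    (Set.mem_Ici.2 (sq_nonneg _)) (Set.mem_Ici.2 (sq_nonneg _)) ⟨hsub_le, hle_add⟩ hpar
  rw [hsq (norm_nonneg _), hsq (norm_nonneg _), hsq (abs_nonneg _), hsq (by positivity)] at hmajor
  rwa [add_comm (_ ^ r) (|_| ^ r)]

theorem ClarksonInequality.of_innerProductSpace (𝕜 E : Type*) [RCLike 𝕜] [NormedAddCommGroup E]
    [InnerProductSpace 𝕜 E] {m : ℕ} (hm : 2 ≤ m) {p : ℝ} (hp : 0 < p)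
    (hpm : p ≤ (m : ℝ) / ((m : ℝ) - 1)) : ClarksonInequality E m p := by
  intro x y
  set q : ℝ := m / (m - 1) with hq
  have hm' : (2 : ℝ) ≤ m := by exact_mod_cast hm
  have hqm : 1 / q * m = (m - 1 : ℕ) := by
    rw [Nat.cast_pred (by omega), hq]
    field_simp
  calc ‖x + y‖ ^ (m : ℝ) + ‖x - y‖ ^ (m : ℝ)
      ≤ (‖x‖ + ‖y‖) ^ (m : ℝ) + |‖x‖ - ‖y‖| ^ (m : ℝ) :=
        norm_add_rpow_add_norm_sub_rpow_le 𝕜 hm' x y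
    _ ≤ 2 * (‖x‖ ^ q + ‖y‖ ^ q) ^ (m - 1) := by
        simpa only [Real.rpow_natCast] using
          add_pow_add_abs_sub_pow_le (norm_nonneg x) (norm_nonneg y) hm
    _ = 2 * ((‖x‖ ^ q + ‖y‖ ^ q) ^ (1 / q)) ^ (m : ℝ) := by
        rw [← Real.rpow_mul (by positivity), hqm, Real.rpow_natCast]
    _ ≤ 2 * ((‖x‖ ^ p + ‖y‖ ^ p) ^ (1 / p)) ^ (m : ℝ) := by
        gcongr
        exact Real.rpow_add_rpow_le (norm_nonneg x) (norm_nonneg y) hp hpm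
    _ = 2 * (‖x‖ ^ p + ‖y‖ ^ p) ^ (m / p) := by
        rw [← Real.rpow_mul (by positivity), one_div_mul_eq_div]

theorem clarksonInequality_iff_rpow_div {E : Type*} [NormedAddCommGroup E] {r p : ℝ} (hr : 0 < r)
    (hp : 0 < p) : ClarksonInequality E r p ↔ ∀ x y : E,
      (‖x + y‖ ^ r + ‖x - y‖ ^ r) ^ (p / r) ≤ 2 ^ (p / r) * (‖x‖ ^ p + ‖y‖ ^ p) := by
  refine forall₂_congr fun x y ↦ ?_
  have hbase : 0 ≤ ‖x‖ ^ p + ‖y‖ ^ p := by positivity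
  rw [← Real.rpow_le_rpow_iff (by positivity) (by positivity) (div_pos hp hr),
    Real.mul_rpow two_pos.le (by positivity), ← Real.rpow_mul hbase, div_mul_div_cancel₀ hp.ne',
    div_self hr.ne', Real.rpow_one]

theorem rpow_sum_norm_integral_rpow_le {α ι E : Type*} [MeasurableSpace α] {μ : Measure α}
    [Fintype ι] [NormedAddCommGroup E] [NormedSpace ℝ E] [CompleteSpace E] {r : ℝ} (hr : 1 ≤ r)
    {φ : ι → α → E} (hφ : ∀ i, Integrable (φ i) μ) :
    (∑ i, ‖∫ t, φ i t ∂μ‖ ^ r) ^ (1 / r) ≤ ∫ t, (∑ i, ‖φ i t‖ ^ r) ^ (1 / r) ∂μ := by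
  set s := ENNReal.ofReal r
  have : Fact (1 ≤ s) := ⟨by simpa [s] using hr⟩
  have hs : s.toReal = r := ENNReal.toReal_ofReal (by linarith)
  have hnorm (v : PiLp s fun _ : ι ↦ E) : ‖v‖ = (∑ i, ‖v i‖ ^ r) ^ (1 / r) := by
    rw [PiLp.norm_eq_sum (by rw [hs]; linarith), hs]
  let Φ (t : α) : PiLp s fun _ : ι ↦ E := WithLp.toLp s fun i ↦ φ i t
  calc (∑ i, ‖∫ t, φ i t ∂μ‖ ^ r) ^ (1 / r)
      = ‖∫ t, Φ t ∂μ‖ := by simp only [hnorm, eval_integral_piLp (f := Φ) hφ]; rfl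
    _ ≤ ∫ t, ‖Φ t‖ ∂μ := norm_integral_le_integral_norm Φ
    _ = ∫ t, (∑ i, ‖φ i t‖ ^ r) ^ (1 / r) ∂μ := by simp only [hnorm, Φ]

section Lp

variable {α E : Type*} [MeasurableSpace α] {μ : Measure α} [NormedAddCommGroup E] {p : ENNReal}

theorem Lp_norm_rpow_toReal (hp0 : p ≠ 0) (hp : p ≠ ⊤) (x : Lp E p μ) :
    ‖x‖ ^ p.toReal = ∫ t, ‖x t‖ ^ p.toReal ∂μ := by
  rw [Lp.norm_def, toReal_eLpNorm (Lp.memLp x).1,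
    lpNorm_eq_integral_norm_rpow_toReal hp0 hp (Lp.memLp x).1,
    Real.rpow_inv_rpow (integral_nonneg fun t ↦ by positivity) (ENNReal.toReal_pos hp0 hp).ne']

theorem ClarksonInequality.lp [Fact (1 ≤ p)] (hp : p ≠ ⊤) {r : ℝ} (hpr : p.toReal ≤ r)
    (hE : ClarksonInequality E r p.toReal) : ClarksonInequality (Lp E p μ) r p.toReal := by
  have hp0 : p ≠ 0 := (zero_lt_one.trans_le Fact.out).ne'
  set q := p.toReal
  have hq : 0 < q := ENNReal.toReal_pos hp0 hp
  have hr : 0 < r := hq.trans_le hpr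
  have hint (z : Lp E p μ) : Integrable (fun t ↦ ‖z t‖ ^ q) μ :=
    (Lp.memLp z).integrable_norm_rpow hp0 hp
  have hpow {c : ℝ} (hc : 0 ≤ c) : ‖c ^ q‖ ^ (r / q) = c ^ r := by
    rw [Real.norm_of_nonneg (by positivity), ← Real.rpow_mul hc, mul_div_cancel₀ _ hq.ne']
  rw [clarksonInequality_iff_rpow_div hr hq] at hE ⊢
  intro x y
  have minkowski := rpow_sum_norm_integral_rpow_le ((one_le_div hq).2 hpr)
    (φ := ![fun t ↦ ‖(x + y) t‖ ^ q, fun t ↦ ‖(x - y) t‖ ^ q])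
    (Fin.forall_fin_two.2 ⟨hint _, hint _⟩)
  simp only [Fin.sum_univ_two, Matrix.cons_val_zero, Matrix.cons_val_one,
    ← Lp_norm_rpow_toReal hp0 hp, hpow (norm_nonneg _), one_div_div, q] at minkowski
  calc (‖x + y‖ ^ r + ‖x - y‖ ^ r) ^ (q / r)
      ≤ ∫ t, (‖(x + y) t‖ ^ r + ‖(x - y) t‖ ^ r) ^ (q / r) ∂μ := minkowski
    _ ≤ ∫ t, 2 ^ (q / r) * (‖x t‖ ^ q + ‖y t‖ ^ q) ∂μ := by
        refine integral_mono_of_nonneg (.of_forall fun t ↦ by positivity)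
          (((hint x).add (hint y)).const_mul _) ?_
        filter_upwards [Lp.coeFn_add x y, Lp.coeFn_sub x y] with t hadd hsub
        rw [hadd, hsub]
        exact hE (x t) (y t)
    _ = 2 ^ (q / r) * (‖x‖ ^ q + ‖y‖ ^ q) := by
        rw [integral_const_mul, integral_add (hint x) (hint y), Lp_norm_rpow_toReal hp0 hp,
          Lp_norm_rpow_toReal hp0 hp]

end Lp

theorem iteratedDeriv_comp_add_smul {𝕜 E G : Type*} [NontriviallyNormedField 𝕜]
    [NormedAddCommGroup E] [NormedSpace 𝕜 E] [NormedAddCommGroup G] [NormedSpace 𝕜 G] {k : ℕ}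
    {F : E → G} (hF : ContDiff 𝕜 k F) (x y : E) (t : 𝕜) :
    iteratedDeriv k (fun z : 𝕜 ↦ F (x + z • y)) t =
      iteratedFDeriv 𝕜 k F (x + t • y) fun _ ↦ y := by
  let ℓ : 𝕜 →L[𝕜] E := ContinuousLinearMap.toSpanSingleton 𝕜 y
  have htranslate : ContDiff 𝕜 k fun u ↦ F (x + u) := hF.comp (by fun_prop)
  have hcomp : (fun z : 𝕜 ↦ F (x + z • y)) = (fun u ↦ F (x + u)) ∘ ℓ := rfl
  rw [iteratedDeriv_eq_iteratedFDeriv, hcomp,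
    ℓ.iteratedFDeriv_comp_right htranslate t le_rfl,
    iteratedFDeriv_comp_add_left]
  simp [ℓ]

theorem norm_apply_const_le_sSup_mul_pow {𝕜 E G : Type*} [RCLike 𝕜] [NormedAddCommGroup E]
    [NormedSpace 𝕜 E] [NormedAddCommGroup G] [NormedSpace 𝕜 G] {m : ℕ}
    (L : ContinuousMultilinearMap 𝕜 (fun _ : Fin m ↦ E) G) (u : E) :
    ‖L fun _ ↦ u‖ ≤ sSup ((fun y ↦ ‖L fun _ ↦ y‖) '' closedBall 0 1) * ‖u‖ ^ m := by
  have hbdd : BddAbove ((fun y ↦ ‖L fun _ ↦ y‖) '' closedBall 0 1) := by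
    refine ⟨‖L‖, Set.forall_mem_image.2 fun y hy ↦ ?_⟩
    have hprod : ∏ _ : Fin m, ‖y‖ ≤ 1 := by
      simpa using pow_le_one₀ (norm_nonneg y) (mem_closedBall_zero_iff.1 hy)
    exact (L.le_opNorm _).trans (mul_le_of_le_one_right (norm_nonneg L) hprod)
  obtain ⟨v, hv, huv⟩ : ∃ v : E, ‖v‖ ≤ 1 ∧ (‖u‖ : 𝕜) • v = u := by
    rcases eq_or_ne u 0 with rfl | hu
    · exact ⟨0, by simp⟩
    · exact ⟨(‖u‖⁻¹ : 𝕜) • u, (norm_smul_inv_norm hu).le,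
        smul_inv_smul₀ (by simpa using hu) u⟩
  calc ‖L fun _ ↦ u‖ = ‖u‖ ^ m * ‖L fun _ ↦ v‖ := by
        conv_lhs => rw [← huv]
        simp [L.map_smul_univ (fun _ ↦ (‖u‖ : 𝕜)), norm_smul]
    _ ≤ ‖u‖ ^ m * sSup ((fun y ↦ ‖L fun _ ↦ y‖) '' closedBall 0 1) := by
        gcongr
        exact le_csSup hbdd ⟨v, mem_closedBall_zero_iff.2 hv, rfl⟩
    _ = _ := mul_comm _ _

section Bernstein

variable {E G : Type*} [NormedAddCommGroup E] [NormedSpace ℂ E] [NormedAddCommGroup G]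
  [NormedSpace ℂ G]

theorem norm_iteratedDeriv_zero_le_of_norm_add_norm_neg_le [CompleteSpace G] {f : ℂ → G}
    (hf : Differentiable ℂ f) {M : ℝ} (hM : ∀ z, ‖z‖ = 1 → ‖f z‖ + ‖f (-z)‖ ≤ 2 * M) (k : ℕ) :
    ‖iteratedDeriv k f 0‖ ≤ k.factorial * M := by
  let g (z : ℂ) : G := f z + (-1 : ℂ) ^ k • f (-z)
  have hf_neg : Differentiable ℂ fun z ↦ f (-z) := hf.comp differentiable_neg
  have hf_smul : Differentiable ℂ fun z ↦ (-1 : ℂ) ^ k • f (-z) := hf_neg.const_smul _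
  have hg : Differentiable ℂ g := hf.add hf_smul
  have hg_deriv : iteratedDeriv k g 0 = (2 : ℂ) • iteratedDeriv k f 0 := by
    rw [iteratedDeriv_fun_add hf.contDiff.contDiffAt hf_smul.contDiff.contDiffAt,
      iteratedDeriv_fun_const_smul hf_neg.contDiff.contDiffAt, iteratedDeriv_comp_neg, neg_zero,
      smul_smul, ← mul_pow, neg_one_mul, neg_neg, one_pow, one_smul, two_smul]
  have hg_le (z : ℂ) (hz : z ∈ sphere 0 1) : ‖g z‖ ≤ 2 * M :=
    calc ‖g z‖ ≤ ‖f z‖ + ‖(-1 : ℂ) ^ k • f (-z)‖ := norm_add_le _ _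
      _ = ‖f z‖ + ‖f (-z)‖ := by simp [norm_smul]
      _ ≤ 2 * M := hM z (mem_sphere_zero_iff_norm.1 hz)
  have cauchy := Complex.norm_iteratedDeriv_le_of_forall_mem_sphere_norm_le k one_pos
    hg.diffContOnCl hg_le
  rw [hg_deriv, norm_smul, Complex.norm_ofNat, one_pow, div_one] at cauchy
  linarith

variable [CompleteSpace G] {m : ℕ} {p : ℝ}

theorem norm_iteratedFDeriv_apply_const_le_of_add_rpow_le_one (hp : 0 < p)
    (hE : ClarksonInequality E m p) (L : ContinuousMultilinearMap ℂ (fun _ : Fin m ↦ E) G)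
    {x y : E} (hxy : ‖x‖ ^ p + ‖y‖ ^ p ≤ 1) (k : ℕ) :
    ‖iteratedFDeriv ℂ k (fun u ↦ L fun _ ↦ u) x fun _ ↦ y‖ ≤
      k.factorial * sSup ((fun y ↦ ‖L fun _ ↦ y‖) '' closedBall 0 1) := by
  set F : E → G := fun u ↦ L fun _ ↦ u
  set M := sSup ((fun y ↦ ‖F y‖) '' closedBall 0 1)
  have hF {n : WithTop ℕ∞} : ContDiff ℂ n F := L.contDiff.comp (contDiff_pi.2 fun _ ↦ contDiff_id)
  have hM : 0 ≤ M := Real.sSup_nonneg (Set.forall_mem_image.2 fun _ _ ↦ norm_nonneg _)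
  have hF_le (u : E) : ‖F u‖ ≤ M * ‖u‖ ^ (m : ℝ) := by
    simpa only [Real.rpow_natCast] using norm_apply_const_le_sSup_mul_pow L u
  have hclarkson (z : ℂ) (hz : ‖z‖ = 1) : ‖F (x + z • y)‖ + ‖F (x + -z • y)‖ ≤ 2 * M :=
    calc ‖F (x + z • y)‖ + ‖F (x + -z • y)‖
        ≤ M * ‖x + z • y‖ ^ (m : ℝ) + M * ‖x - z • y‖ ^ (m : ℝ) := by
          rw [neg_smul, ← sub_eq_add_neg]
          exact add_le_add (hF_le _) (hF_le _)
      _ = M * (‖x + z • y‖ ^ (m : ℝ) + ‖x - z • y‖ ^ (m : ℝ)) := (mul_add ..).symm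
      _ ≤ M * (2 * (‖x‖ ^ p + ‖z • y‖ ^ p) ^ (m / p)) := by gcongr; exact hE x (z • y)
      _ ≤ M * (2 * 1) := by
          gcongr
          rw [norm_smul, hz, one_mul]
          exact Real.rpow_le_one (by positivity) hxy (by positivity)
      _ = 2 * M := by ring
  have hline := norm_iteratedDeriv_zero_le_of_norm_add_norm_neg_le
    (f := fun z : ℂ ↦ F (x + z • y)) ((hF.differentiable one_ne_zero).comp (by fun_prop))
    hclarkson k
  rwa [iteratedDeriv_comp_add_smul hF, zero_smul, add_zero] at hline

theorem norm_iteratedFDeriv_apply_const_le (hp : 0 < p) (hE : ClarksonInequality E m p)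
    (L : ContinuousMultilinearMap ℂ (fun _ : Fin m ↦ E) G) {x y : E} (hx : ‖x‖ < 1)
    (hy : ‖y‖ ≤ 1) (k : ℕ) :
    ‖iteratedFDeriv ℂ k (fun u ↦ L fun _ ↦ u) x fun _ ↦ y‖ ≤
      k.factorial * (1 - ‖x‖ ^ p) ^ (-(k : ℝ) / p) *
        sSup ((fun y ↦ ‖L fun _ ↦ y‖) '' closedBall 0 1) := by
  set D := iteratedFDeriv ℂ k (fun u ↦ L fun _ ↦ u) x
  set M := sSup ((fun y ↦ ‖L fun _ ↦ y‖) '' closedBall 0 1)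
  have hpos : 0 < 1 - ‖x‖ ^ p := sub_pos.2 (Real.rpow_lt_one (norm_nonneg x) hx hp)
  set ρ := (1 - ‖x‖ ^ p) ^ (1 / p) with hρ
  have hρ_pos : 0 < ρ := by positivity
  have hρ_pow : (1 - ‖x‖ ^ p) ^ (-(k : ℝ) / p) = (ρ ^ k)⁻¹ := by
    rw [hρ, ← Real.rpow_mul_natCast hpos.le, ← Real.rpow_neg hpos.le]
    congr 1
    ring
  have hρy : ‖x‖ ^ p + ‖(ρ : ℂ) • y‖ ^ p ≤ 1 :=
    calc ‖x‖ ^ p + ‖(ρ : ℂ) • y‖ ^ p ≤ ‖x‖ ^ p + ρ ^ p := by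
          gcongr
          rw [norm_smul, Complex.norm_of_nonneg hρ_pos.le]
          exact mul_le_of_le_one_right hρ_pos.le hy
      _ = 1 := by rw [hρ, one_div, Real.rpow_inv_rpow hpos.le hp.ne']; ring
  have hscale : ‖D fun _ ↦ (ρ : ℂ) • y‖ = ρ ^ k * ‖D fun _ ↦ y‖ := by
    rw [D.map_smul_univ (fun _ ↦ (ρ : ℂ)), norm_smul]
    simp [abs_of_pos hρ_pos]
  have hbound := norm_iteratedFDeriv_apply_const_le_of_add_rpow_le_one hp hE L hρy k
  rw [hscale] at hbound
  rw [hρ_pow, mul_right_comm, ← div_eq_mul_inv, le_div_iff₀' (by positivity)]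
  exact hbound

end Bernstein

theorem bernstein_homogeneous_Lp_small_p_general {α H G : Type*} [MeasurableSpace α]
    (μ : Measure α) [NormedAddCommGroup H] [InnerProductSpace ℂ H] [NormedAddCommGroup G]
    [NormedSpace ℂ G] [CompleteSpace G] (m k : ℕ) (hm : 2 ≤ m) (p : ℝ)
    (hpm : p ≤ (m : ℝ) / ((m : ℝ) - 1)) [Fact (1 ≤ ENNReal.ofReal p)]
    (F : Lp H (ENNReal.ofReal p) μ → G)
    (hF : ∃ L : ContinuousMultilinearMap ℂ (fun _ : Fin m ↦ Lp H (ENNReal.ofReal p) μ) G,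
      ∀ u, F u = L fun _ ↦ u)
    (x : Lp H (ENNReal.ofReal p) μ) (hx : ‖x‖ < 1) :
    sSup ((fun y ↦ ‖iteratedFDeriv ℂ k F x fun _ ↦ y‖) '' closedBall 0 1) ≤
      k.factorial * (1 - ‖x‖ ^ p) ^ (-(k : ℝ) / p) *
        sSup ((fun y ↦ ‖F y‖) '' closedBall 0 1) := by
  obtain ⟨L, hL⟩ := hF
  obtain rfl : F = fun u ↦ L fun _ ↦ u := funext hL
  have hp : 0 < p := one_pos.trans_le (ENNReal.one_le_ofReal.1 Fact.out)
  have hpm' : p ≤ m := hpm.trans (div_le_self m.cast_nonneg (by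
    have : (2 : ℝ) ≤ m := by exact_mod_cast hm
    linarith))
  have htoReal : (ENNReal.ofReal p).toReal = p := ENNReal.toReal_ofReal hp.le
  have hH : ClarksonInequality H m (ENNReal.ofReal p).toReal := by
    rw [htoReal]
    exact .of_innerProductSpace ℂ H hm hp hpm
  have hLp : ClarksonInequality (Lp H (ENNReal.ofReal p) μ) m (ENNReal.ofReal p).toReal :=
    hH.lp ENNReal.ofReal_ne_top (htoReal.trans_le hpm')
  rw [htoReal] at hLp
  refine csSup_le ((nonempty_closedBall.2 zero_le_one).image _) (Set.forall_mem_image.2 ?_)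
  exact fun y hy ↦ norm_iteratedFDeriv_apply_const_le hp hLp L hx
    (mem_closedBall_zero_iff.1 hy) k

/-- Bernstein-type inequality for an `m`-homogeneous polynomial on a complex `L_p(μ)`
space with `1 ≤ p ≤ m' = m/(m-1)`: for `k ≤ m` and `‖x‖_p < 1`,
`‖D̂^k L̂(x)‖ ≤ k! (1 - ‖x‖_p^p)^(-k/p) ‖L̂‖`. -/
theorem bernstein_homogeneous_Lp_small_p
    {α : Type*} [MeasurableSpace α] (μ : Measure α)
    (m k : ℕ) (hm : 2 ≤ m) (hk : k ≤ m) (p : ℝ)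
    (hp1 : 1 ≤ p) (hpm : p ≤ (m : ℝ) / ((m : ℝ) - 1)) [Fact (1 ≤ ENNReal.ofReal p)]
    (F : Lp ℂ (ENNReal.ofReal p) μ → ℂ)
    (hF : ∃ L : ContinuousMultilinearMap ℂ (fun _ : Fin m => Lp ℂ (ENNReal.ofReal p) μ) ℂ,
      (∀ (σ : Equiv.Perm (Fin m)) (v : Fin m → Lp ℂ (ENNReal.ofReal p) μ), L (v ∘ σ) = L v) ∧
      ∀ u, F u = L (fun _ => u))
    (x : Lp ℂ (ENNReal.ofReal p) μ) (hx : ‖x‖ < 1) :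
    sSup ((fun y => ‖iteratedFDeriv ℂ k F x (fun _ => y)‖)
        '' closedBall (0 : Lp ℂ (ENNReal.ofReal p) μ) 1)
      ≤ (k.factorial : ℝ) * (1 - ‖x‖ ^ p) ^ (-(k : ℝ) / p)
          * sSup ((fun y => ‖F y‖) '' closedBall (0 : Lp ℂ (ENNReal.ofReal p) μ) 1) :=
  bernstein_homogeneous_Lp_small_p_general μ m k hm p hpm F (hF.imp fun _ hL ↦ hL.2) x hx
end

section
/- Let 1 ≤ p < ∞, let m ≥ 2, and on the sequence space ℓ_p (real or complex) consider the continuous m-homogeneous polynomial P(u) = u₁u₂⋯u_m, associated with the symmetric m-linear form L(x₁,…,x_m) = (1/m!) Σ_{σ ∈ S_m} x_{1σ(1)}⋯x_{mσ(m)}. Then ‖P‖ = m^{−m/p}, and for 1 ≤ k ≤ m−1 the unit vectors x = (m−k)^{−1/p}(e₁+⋯+e_{m−k}) and y = k^{−1/p}(e_{m−k+1}+⋯+e_m) satisfy |D̂^k P(x) y| = k!·m^{m/p}/((m−k)^{(m−k)/p}·k^{k/p}) · ‖P‖; in particular the Markov-type bound C_{k,m} = k!·m^{m/p}/((m−k)^{(m−k)/p}·k^{k/p})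 is attained when 1 ≤ p ≤ m/(m−1). -/
open Metric
open scoped ENNReal

/-- The Markov constant `C_{k,m} = k! m^{m/p} / ((m-k)^{(m-k)/p} k^{k/p})`. -/
noncomputable def markovC (k m : ℕ) (r : ℝ) : ℝ :=
  (k.factorial : ℝ) * (m : ℝ) ^ ((m : ℝ) / r)
    / (((m : ℝ) - (k : ℝ)) ^ (((m : ℝ) - (k : ℝ)) / r) * (k : ℝ) ^ ((k : ℝ) / r))

/-!
The norm of `P(u) = u₁⋯u_m` comes from the inequality between the geometric and the arithmetic mean
of the `|u_i|^p`, with equality at the normalized indicator of `{1, …, m}`. Since `x` and `y` have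
complementary supports, `P(x + t y)` is a multiple of `t^k`, so `D̂^k P(x) y` is `k!` times
the coefficient, which is the product of the nonzero coordinates of `x` and `y`.
-/

open Finset

section SymmetrizedProduct

variable {𝕜 E ι : Type*} [Fintype ι] [DecidableEq ι] [Field 𝕜] [TopologicalSpace 𝕜]
  [IsTopologicalSemiring 𝕜] [AddCommMonoid E] [Module 𝕜 E] [TopologicalSpace E]

/-- The symmetrization of the multilinear map `v ↦ ∏ i, φ i (v i)`: the average over all
permutations `σ` of the products `∏ i, φ (σ i) (v i)`. It is the symmetric multilinear form whose
diagonal is the polynomial `u ↦ ∏ i, φ i u`. -/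
def symmetrizedProd (φ : ι → E →L[𝕜] 𝕜) : ContinuousMultilinearMap 𝕜 (fun _ : ι => E) 𝕜 :=
  ((Fintype.card ι).factorial : 𝕜)⁻¹ • ∑ σ : Equiv.Perm ι,
    (ContinuousMultilinearMap.mkPiAlgebra 𝕜 ι 𝕜).compContinuousLinearMap fun i => φ (σ i)

theorem symmetrizedProd_apply (φ : ι → E →L[𝕜] 𝕜) (v : ι → E) :
    symmetrizedProd φ v =
      ((Fintype.card ι).factorial : 𝕜)⁻¹ * ∑ σ : Equiv.Perm ι, ∏ i, φ (σ i) (v i) := by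
  simp [symmetrizedProd]

theorem symmetrizedProd_comp_perm (φ : ι → E →L[𝕜] 𝕜) (σ : Equiv.Perm ι) (v : ι → E) :
    symmetrizedProd φ (v ∘ σ) = symmetrizedProd φ v := by
  rw [symmetrizedProd_apply, symmetrizedProd_apply]
  congr 1
  refine Fintype.sum_equiv (Equiv.mulRight σ⁻¹) _ _ fun τ => ?_
  exact Fintype.prod_equiv σ _ _ fun i => by simp

theorem symmetrizedProd_diag [CharZero 𝕜] (φ : ι → E →L[𝕜] 𝕜) (u : E) :
    symmetrizedProd φ (fun _ => u) = ∏ i, φ i u := by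
  have hprod (σ : Equiv.Perm ι) : ∏ i, φ (σ i) u = ∏ i, φ i u :=
    Equiv.prod_comp σ fun i => φ i u
  have hcard : ((Fintype.card ι).factorial : 𝕜) ≠ 0 := mod_cast Nat.factorial_ne_zero _
  simp only [symmetrizedProd_apply, hprod, sum_const, card_univ, Fintype.card_perm, nsmul_eq_mul]
  exact inv_mul_cancel_left₀ hcard _

end SymmetrizedProduct

section DirectionalDerivative

variable {𝕜 E F ι : Type*} [NontriviallyNormedField 𝕜] [NormedAddCommGroup E] [NormedSpace 𝕜 E]
  [NormedAddCommGroup F] [NormedSpace 𝕜 F]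

theorem iteratedFDeriv_apply_const_eq_iteratedDeriv {f : E → F} {n : ℕ} (hf : ContDiff 𝕜 n f)
    (x y : E) :
    iteratedFDeriv 𝕜 n f x (fun _ => y) = iteratedDeriv n (fun t : 𝕜 => f (x + t • y)) 0 := by
  have hshift : ContDiff 𝕜 n fun z => f (x + z) := hf.comp (contDiff_const.add contDiff_id)
  have hline := (ContinuousLinearMap.toSpanSingleton 𝕜 y).iteratedFDeriv_comp_right hshift 0 le_rfl
  simpa [iteratedDeriv_eq_iteratedFDeriv, Function.comp_def, iteratedFDeriv_comp_add_left]
    using (DFunLike.congr_fun hline fun _ => 1).symm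

theorem iteratedFDeriv_prod_union_apply_const [DecidableEq ι] (φ : ι → E →L[𝕜] 𝕜) {s t : Finset ι}
    (hst : Disjoint s t) {x y : E} (hx : ∀ i ∈ t, φ i x = 0) (hy : ∀ i ∈ s, φ i y = 0) :
    iteratedFDeriv 𝕜 #t (fun u => ∏ i ∈ s ∪ t, φ i u) x (fun _ => y) =
      (#t).factorial * ((∏ i ∈ s, φ i x) * ∏ i ∈ t, φ i y) := by
  have hsmooth : ContDiff 𝕜 #t fun u => ∏ i ∈ s ∪ t, φ i u :=
    contDiff_prod fun i _ => (φ i).contDiff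
  have hline (τ : 𝕜) : ∏ i ∈ s ∪ t, φ i (x + τ • y) =
      ((∏ i ∈ s, φ i x) * ∏ i ∈ t, φ i y) * τ ^ #t := by
    have hs : ∏ i ∈ s, φ i (x + τ • y) = ∏ i ∈ s, φ i x :=
      prod_congr rfl fun i hi => by simp [hy i hi]
    have ht : ∏ i ∈ t, φ i (x + τ • y) = τ ^ #t * ∏ i ∈ t, φ i y := by
      rw [← prod_const, ← prod_mul_distrib]
      exact prod_congr rfl fun i hi => by simp [hx i hi]
    rw [prod_union hst, hs, ht]
    ring
  simp only [iteratedFDeriv_apply_const_eq_iteratedDeriv hsmooth, hline]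
  rw [iteratedDeriv_const_mul_field, iteratedDeriv_fun_pow_zero, if_pos rfl, mul_comm]

end DirectionalDerivative

section CoordinateProducts

variable {ι : Type*} {s t : Finset ι} {p : ℝ≥0∞}

theorem prod_le_rpow_mean_rpow (hs : s.Nonempty) {r : ℝ} (hr : 0 < r) {z : ι → ℝ}
    (hz : ∀ i ∈ s, 0 ≤ z i) :
    ∏ i ∈ s, z i ≤ ((∑ i ∈ s, z i ^ r) / #s) ^ ((#s : ℝ) / r) := by
  have hsum : 0 ≤ ∑ i ∈ s, z i ^ r := sum_nonneg fun i hi => Real.rpow_nonneg (hz i hi) r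
  rw [← Real.rpow_inv_le_iff_of_pos (prod_nonneg hz) (by positivity) (by positivity)]
  have hamgm := Real.geom_mean_le_arith_mean s (fun _ => r⁻¹) (fun i => z i ^ r)
    (fun _ _ => by positivity) (by simp only [sum_const, nsmul_eq_mul]; positivity)
    fun i hi => Real.rpow_nonneg (hz i hi) r
  have hpow : ∏ i ∈ s, (z i ^ r) ^ r⁻¹ = ∏ i ∈ s, z i :=
    prod_congr rfl fun i hi => Real.rpow_rpow_inv (hz i hi) hr.ne'
  rw [hpow, ← mul_sum, sum_const, nsmul_eq_mul, ← div_eq_mul_inv] at hamgm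
  convert hamgm using 1
  field_simp

theorem prod_norm_apply_le {E : ι → Type*} [∀ i, NormedAddCommGroup (E i)] (hp : 0 < p.toReal)
    (hs : s.Nonempty) (u : lp E p) :
    ∏ i ∈ s, ‖u i‖ ≤ (#s : ℝ) ^ (-(#s : ℝ) / p.toReal) * ‖u‖ ^ #s := by
  have hu : 0 ≤ ‖u‖ := lp.norm_nonneg' u
  calc ∏ i ∈ s, ‖u i‖
      ≤ ((∑ i ∈ s, ‖u i‖ ^ p.toReal) / #s) ^ ((#s : ℝ) / p.toReal) :=
        prod_le_rpow_mean_rpow hs hp fun i _ => norm_nonneg _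
    _ ≤ (‖u‖ ^ p.toReal / #s) ^ ((#s : ℝ) / p.toReal) := by
        gcongr
        exact lp.sum_rpow_le_norm_rpow hp u s
    _ = (#s : ℝ) ^ (-(#s : ℝ) / p.toReal) * ‖u‖ ^ #s := by
        rw [Real.div_rpow (by positivity) (by positivity), ← Real.rpow_mul hu,
          mul_div_cancel₀ _ hp.ne', Real.rpow_natCast, neg_div, Real.rpow_neg (by positivity),
          div_eq_inv_mul]

variable (𝕜 : Type*) [RCLike 𝕜]

/-- The indicator of the finite set `s`, scaled by `#s ^ (-1 / p)` so as to be a unit vector of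
`ℓ_p`. The exponent is meant to be finite: at `p = ∞` the factor is `1`, by the
conventions `∞.toReal = 0` and `x / 0 = 0`. -/
noncomputable def normalizedIndicator [DecidableEq ι] (p : ℝ≥0∞) (s : Finset ι) :
    lp (fun _ : ι => 𝕜) p :=
  (((#s : ℝ) ^ (-(1 : ℝ) / p.toReal) : ℝ) : 𝕜) • ∑ i ∈ s, lp.single p i (1 : 𝕜)

theorem normalizedIndicator_apply [DecidableEq ι] (p : ℝ≥0∞) (s : Finset ι) (j : ι) :
    normalizedIndicator 𝕜 p s j =
      if j ∈ s then (((#s : ℝ) ^ (-(1 : ℝ) / p.toReal) : ℝ) : 𝕜) else 0 := by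
  simp only [normalizedIndicator, lp.coeFn_smul, Pi.smul_apply, lp.coeFn_sum, lp.coeFn_single,
    Finset.sum_apply, sum_pi_single, smul_eq_mul, mul_ite, mul_one, mul_zero]

theorem norm_normalizedIndicator [DecidableEq ι] [Fact (1 ≤ p)] (hp : 0 < p.toReal)
    (hs : s.Nonempty) :
    ‖normalizedIndicator 𝕜 p s‖ = 1 := by
  have hcard : (0 : ℝ) < #s := mod_cast hs.card_pos
  have hsum : ‖∑ i ∈ s, lp.single (E := fun _ : ι => 𝕜) p i 1‖ = (#s : ℝ) ^ p.toReal⁻¹ := by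
    rw [Real.eq_rpow_inv (norm_nonneg _) hcard.le hp.ne',
      lp.norm_sum_single (E := fun _ : ι => 𝕜) hp (fun _ => 1) s]
    simp
  rw [normalizedIndicator, norm_smul, hsum, RCLike.norm_ofReal, abs_of_nonneg (by positivity),
    ← Real.rpow_add hcard, neg_div, one_div, neg_add_cancel, Real.rpow_zero]

theorem norm_prod_normalizedIndicator [DecidableEq ι] (p : ℝ≥0∞) (s : Finset ι) :
    ‖∏ i ∈ s, normalizedIndicator 𝕜 p s i‖ = (#s : ℝ) ^ (-(#s : ℝ) / p.toReal) := by
  have hcoord (i : ι) (hi : i ∈ s) :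
      ‖normalizedIndicator 𝕜 p s i‖ = (#s : ℝ) ^ (-(1 : ℝ) / p.toReal) := by
    rw [normalizedIndicator_apply, if_pos hi, RCLike.norm_ofReal, abs_of_nonneg (by positivity)]
  rw [norm_prod, prod_congr rfl hcoord, prod_const, ← Real.rpow_mul_natCast (by positivity)]
  congr 1
  ring

theorem isGreatest_norm_prod_apply_closedBall [Fact (1 ≤ p)] (hp : 0 < p.toReal)
    (hs : s.Nonempty) :
    IsGreatest ((fun u : lp (fun _ : ι => 𝕜) p => ‖∏ i ∈ s, u i‖) '' closedBall 0 1)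
      ((#s : ℝ) ^ (-(#s : ℝ) / p.toReal)) := by
  classical
  refine ⟨⟨normalizedIndicator 𝕜 p s, ?_, norm_prod_normalizedIndicator 𝕜 p s⟩, ?_⟩
  · exact mem_closedBall_zero_iff.2 (norm_normalizedIndicator 𝕜 hp hs).le
  · rintro _ ⟨u, hu, rfl⟩
    have hu_pow : ‖u‖ ^ #s ≤ 1 := pow_le_one₀ (norm_nonneg u) (mem_closedBall_zero_iff.1 hu)
    calc ‖∏ i ∈ s, u i‖ = ∏ i ∈ s, ‖u i‖ := norm_prod _ _
      _ ≤ (#s : ℝ) ^ (-(#s : ℝ) / p.toReal) * ‖u‖ ^ #s := prod_norm_apply_le hp hs u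
      _ ≤ (#s : ℝ) ^ (-(#s : ℝ) / p.toReal) := mul_le_of_le_one_right (by positivity) hu_pow

theorem norm_iteratedFDeriv_prod_union_normalizedIndicator [DecidableEq ι] [Fact (1 ≤ p)]
    (hst : Disjoint s t) :
    ‖iteratedFDeriv 𝕜 #t (fun u : lp (fun _ : ι => 𝕜) p => ∏ i ∈ s ∪ t, u i)
        (normalizedIndicator 𝕜 p s) (fun _ => normalizedIndicator 𝕜 p t)‖ =
      (#t).factorial *
        ((#s : ℝ) ^ (-(#s : ℝ) / p.toReal) * (#t : ℝ) ^ (-(#t : ℝ) / p.toReal)) := by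
  have hx (i : ι) (hi : i ∈ t) : normalizedIndicator 𝕜 p s i = 0 := by
    rw [normalizedIndicator_apply, if_neg (disjoint_right.1 hst hi)]
  have hy (i : ι) (hi : i ∈ s) : normalizedIndicator 𝕜 p t i = 0 := by
    rw [normalizedIndicator_apply, if_neg (disjoint_left.1 hst hi)]
  rw [← norm_prod_normalizedIndicator 𝕜 p s, ← norm_prod_normalizedIndicator 𝕜 p t, ← norm_mul,
    ← RCLike.norm_natCast (K := 𝕜), ← norm_mul]
  exact congrArg norm <|
    iteratedFDeriv_prod_union_apply_const (lp.evalCLM 𝕜 (fun _ : ι => 𝕜) p) hst hx hy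

end CoordinateProducts

theorem markovC_mul_rpow_neg {k m : ℕ} (hm : 0 < m) (hk : k ≤ m) (r : ℝ) :
    markovC k m r * (m : ℝ) ^ (-(m : ℝ) / r) = k.factorial *
      (((m - k : ℕ) : ℝ) ^ (-((m - k : ℕ) : ℝ) / r) * (k : ℝ) ^ (-(k : ℝ) / r)) := by
  have hm_pow : (m : ℝ) ^ ((m : ℝ) / r) ≠ 0 := by positivity
  rw [markovC, ← Nat.cast_sub hk]
  simp only [neg_div, Real.rpow_neg (Nat.cast_nonneg _)]
  field_simp

theorem norm_iteratedFDeriv_prod_range_normalizedIndicator (𝕜 : Type*) [RCLike 𝕜] (p : ℝ≥0∞)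
    [Fact (1 ≤ p)] {k m : ℕ} (hm : 0 < m) (hk : k ≤ m) :
    ‖iteratedFDeriv 𝕜 k (fun u : lp (fun _ : ℕ => 𝕜) p => ∏ i ∈ range m, u i)
        (normalizedIndicator 𝕜 p (range (m - k)))
        (fun _ => normalizedIndicator 𝕜 p (Ico (m - k) m))‖ =
      markovC k m p.toReal * (m : ℝ) ^ (-(m : ℝ) / p.toReal) := by
  have hdisj : Disjoint (range (m - k)) (Ico (m - k) m) := by
    rw [range_eq_Ico]
    exact Ico_disjoint_Ico_consecutive 0 (m - k) m
  have hunion : range (m - k) ∪ Ico (m - k) m = range m := by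
    rw [range_eq_Ico, range_eq_Ico, Ico_union_Ico_eq_Ico (Nat.zero_le _) (Nat.sub_le m k)]
  have hcard : #(Ico (m - k) m) = k := by rw [Nat.card_Ico, Nat.sub_sub_self hk]
  have hderiv := norm_iteratedFDeriv_prod_union_normalizedIndicator 𝕜 (p := p) hdisj
  rwa [hunion, hcard, card_range, ← markovC_mul_rpow_neg hm hk] at hderiv

/-- The extremal example on `ℓ_p` (real or complex): the `m`-homogeneous polynomial
`P(u) = u₁⋯u_m`, diagonal of the symmetric `m`-linear form
`L(x₁,…,x_m) = (1/m!) Σ_σ x_{1σ(1)}⋯x_{mσ(m)}`, has `‖P‖ = m^{-m/p}`, and for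
`1 ≤ k ≤ m-1` the unit vectors `x = (m-k)^{-1/p}(e₁+⋯+e_{m-k})` and
`y = k^{-1/p}(e_{m-k+1}+⋯+e_m)` satisfy
`|D̂^k P(x) y| = k! m^{m/p}/((m-k)^{(m-k)/p} k^{k/p}) ‖P‖`, so the Markov-type bound
`C_{k,m}` is attained (in particular when `1 ≤ p ≤ m/(m-1)`). -/
theorem markov_bound_attained_lp
    {𝕜 : Type*} [RCLike 𝕜] (p : ℝ) (hp1 : 1 ≤ p) [Fact (1 ≤ ENNReal.ofReal p)]
    (m k : ℕ) (hm : 2 ≤ m) (hk1 : 1 ≤ k) (hk : k ≤ m - 1)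
    (P : lp (fun _ : ℕ => 𝕜) (ENNReal.ofReal p) → 𝕜)
    (hPdef : ∀ u, P u = ∏ i ∈ Finset.range m, u i)
    (x y : lp (fun _ : ℕ => 𝕜) (ENNReal.ofReal p))
    (hxdef : x = ((((m : ℝ) - k) ^ (-(1 : ℝ) / p) : ℝ) : 𝕜) •
      ∑ i ∈ Finset.range (m - k), lp.single (ENNReal.ofReal p) i (1 : 𝕜))
    (hydef : y = (((k : ℝ) ^ (-(1 : ℝ) / p) : ℝ) : 𝕜) •
      ∑ i ∈ Finset.Ico (m - k) m, lp.single (ENNReal.ofReal p) i (1 : 𝕜)) :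
    (∃ L : ContinuousMultilinearMap 𝕜
        (fun _ : Fin m => lp (fun _ : ℕ => 𝕜) (ENNReal.ofReal p)) 𝕜,
      (∀ (σ : Equiv.Perm (Fin m)) (v : Fin m → lp (fun _ : ℕ => 𝕜) (ENNReal.ofReal p)),
        L (v ∘ σ) = L v) ∧
      (∀ v, L v = (m.factorial : 𝕜)⁻¹ *
        ∑ σ : Equiv.Perm (Fin m), ∏ i : Fin m, v i ((σ i : ℕ))) ∧
      ∀ u, P u = L (fun _ => u)) ∧
    sSup ((fun u => ‖P u‖) ''
        closedBall (0 : lp (fun _ : ℕ => 𝕜) (ENNReal.ofReal p)) 1)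
      = (m : ℝ) ^ (-(m : ℝ) / p) ∧
    ‖x‖ = 1 ∧ ‖y‖ = 1 ∧
    ‖iteratedFDeriv 𝕜 k P x (fun _ => y)‖
      = markovC k m p * sSup ((fun u => ‖P u‖) ''
          closedBall (0 : lp (fun _ : ℕ => 𝕜) (ENNReal.ofReal p)) 1) := by
  have hp : (ENNReal.ofReal p).toReal = p := ENNReal.toReal_ofReal (zero_le_one.trans hp1)
  have hp0 : 0 < (ENNReal.ofReal p).toReal := hp.symm ▸ zero_lt_one.trans_le hp1
  obtain rfl : P = fun u => ∏ i ∈ range m, u i := funext hPdef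
  obtain rfl : x = normalizedIndicator 𝕜 (ENNReal.ofReal p) (range (m - k)) := by
    rw [hxdef, normalizedIndicator, card_range, hp, Nat.cast_sub (by omega)]
  obtain rfl : y = normalizedIndicator 𝕜 (ENNReal.ofReal p) (Ico (m - k) m) := by
    rw [hydef, normalizedIndicator, Nat.card_Ico, Nat.sub_sub_self (by omega), hp]
  let φ (i : Fin m) := lp.evalCLM 𝕜 (fun _ : ℕ => 𝕜) (ENNReal.ofReal p) i
  have hL (v : Fin m → lp (fun _ : ℕ => 𝕜) (ENNReal.ofReal p)) : symmetrizedProd φ v =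
      (m.factorial : 𝕜)⁻¹ * ∑ σ : Equiv.Perm (Fin m), ∏ i : Fin m, v i ((σ i : ℕ)) :=
    (symmetrizedProd_apply φ v).trans (by rw [Fintype.card_fin]; rfl)
  have hdiag (u : lp (fun _ : ℕ => 𝕜) (ENNReal.ofReal p)) :
      ∏ i ∈ range m, u i = symmetrizedProd φ fun _ => u :=
    (prod_range u).trans (symmetrizedProd_diag φ u).symm
  have hsup := (isGreatest_norm_prod_apply_closedBall 𝕜 hp0
    (nonempty_range_iff.2 (by omega : m ≠ 0))).csSup_eq
  have hderiv := norm_iteratedFDeriv_prod_range_normalizedIndicator 𝕜 (ENNReal.ofReal p)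
    (by omega : 0 < m) (by omega : k ≤ m)
  rw [card_range, hp] at hsup
  rw [hp, ← hsup] at hderiv
  exact ⟨⟨symmetrizedProd φ, symmetrizedProd_comp_perm φ, hL, hdiag⟩, hsup,
    norm_normalizedIndicator 𝕜 hp0 (nonempty_range_iff.2 (by omega)),
    norm_normalizedIndicator 𝕜 hp0 (nonempty_Ico.2 (by omega)), hderiv⟩
end
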